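/- Let R be a commutative ring and let U and V be finitely generated projective R-modules. Let ω be an alternating R-bilinear form on V (ω(v)(v) = 0 for all v) and let f : U → V be an R-linear map which is isotropic for ω, i.e. ω(f(u))(f(u')) = 0 for all u, u' ∈ U. Define g : V → U* by g(v)(u) = ω(v)(f(u)). If f is injective, g is surjective, and the sequence U → V → U* is exact at V (the range of f equals the kernel of g), then ω is non-degenerate: the adjoint map ω♭ : V → V*, v ↦ ω(v, −), is bijective. -/

import Mathlib

/-!
Put `g = f* ∘ ω♭`. If `ω` is `ε`-symmetric, meaning `ω(y, x) = ε ω(x, y)`, then in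

```
 U  ──f─→ V  ──g─→ U*
 │        │        ‖
eval      ω♭       ‖
 ↓        ↓        ‖
U** ─g*─→ V* ─f*─→ U*
```

the right square commutes, and the left one does up to the factor `ε`. Surjectivity of `g` makes
`g*` injective, and together with `ker g ≤ range f` it gives `ker f* ≤ range g*`. Chasing the
diagram as in the five lemma, `ω♭` inherits injectivity and surjectivity from `eval`.
-/

open LinearMap Module

section Dual

variable {R M N P : Type*} [CommRing R] [AddCommGroup M] [AddCommGroup N] [AddCommGroup P]
  [Module R M] [Module R N] [Module R P]

theorem ker_dualMap_le_range_dualMap_of_ker_le_range {f : M →ₗ[R] N} {g : N →ₗ[R] P}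
    (hg : Function.Surjective g) (hfg : ker g ≤ range f) :
    ker f.dualMap ≤ range g.dualMap := by
  rw [ker_dualMap_eq_dualAnnihilator_range, range_dualMap_eq_dualAnnihilator_ker_of_surjective g hg]
  exact Submodule.dualAnnihilator_anti hfg

end Dual

section BilinForm

variable {R U V : Type*} [CommRing R] [AddCommGroup U] [Module R U] [AddCommGroup V] [Module R V]
  {ω : LinearMap.BilinForm R V} {ε : R} {f : U →ₗ[R] V}

theorem flip_eq_neg_one_smul_of_isAlt (hω : ω.IsAlt) : ω.flip = (-1 : R) • ω :=
  LinearMap.ext₂ fun x y ↦ by simp [hω.neg_eq x y]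

theorem dualMap_dualMap_comp_eval_of_flip_eq_smul (hω : ω.flip = ε • ω) (u : U) :
    (f.dualMap ∘ₗ ω).dualMap (Dual.eval R U u) = ε • ω (f u) :=
  LinearMap.congr_fun hω (f u)

theorem injective_of_ker_dualMap_comp_le_range (hω : ω.flip = ε • ω)
    (hU : Function.Injective (Dual.eval R U)) (hsurj : Function.Surjective (f.dualMap ∘ₗ ω))
    (hker : ker (f.dualMap ∘ₗ ω) ≤ range f) : Function.Injective ω := by
  rw [injective_iff_map_eq_zero]
  intro v hv
  obtain ⟨u, rfl⟩ : v ∈ range f := hker (by simp [hv])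
  have eval_u : Dual.eval R U u = 0 := dualMap_injective_of_surjective hsurj <| by
    rw [dualMap_dualMap_comp_eval_of_flip_eq_smul hω, hv, smul_zero, map_zero]
  rw [(map_eq_zero_iff _ hU).mp eval_u, map_zero]

theorem surjective_of_ker_dualMap_comp_le_range (hω : ω.flip = ε • ω)
    (hU : Function.Surjective (Dual.eval R U)) (hsurj : Function.Surjective (f.dualMap ∘ₗ ω))
    (hker : ker (f.dualMap ∘ₗ ω) ≤ range f) : Function.Surjective ω := by
  intro φ
  obtain ⟨v, hv⟩ : ∃ v, f.dualMap (ω v) = f.dualMap φ := hsurj (f.dualMap φ)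
  have sub_mem_ker : φ - ω v ∈ ker f.dualMap := by
    rw [mem_ker, map_sub, hv, sub_self]
  obtain ⟨ψ, hψ⟩ := ker_dualMap_le_range_dualMap_of_ker_le_range hsurj hker sub_mem_ker
  obtain ⟨u, rfl⟩ := hU ψ
  rw [dualMap_dualMap_comp_eval_of_flip_eq_smul hω] at hψ
  exact ⟨v + ε • f u, by rw [map_add, map_smul, hψ, add_sub_cancel]⟩

theorem nondegenerate_of_nondegenerate_isotropic_general [IsReflexive R U]
    (hω : ω.flip = ε • ω) (hsurj : Function.Surjective (f.dualMap ∘ₗ ω))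
    (hker : ker (f.dualMap ∘ₗ ω) ≤ range f) : Function.Bijective ω :=
  have eval_bijective := bijective_dual_eval R U
  ⟨injective_of_ker_dualMap_comp_le_range hω eval_bijective.1 hsurj hker,
    surjective_of_ker_dualMap_comp_le_range hω eval_bijective.2 hsurj hker⟩

end BilinForm

/-- linear-algebra form of Lemma 1.3: let `U`, `V` be finitely generated
projective modules over a commutative ring `R`, `ω` an alternating bilinear form on `V`,
`f : U → V` isotropic for `ω`, and `g : V → U*` defined by `g(v)(u) = ω(v)(f(u))`.
If `f` is injective, `g` is surjective and `range f = ker g`, then `ω` is non-degenerate: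
the adjoint map `ω♭ : V → V*`, `v ↦ ω(v, −)`, is bijective. -/
theorem nondegenerate_of_nondegenerate_isotropic
    (R U V : Type*) [CommRing R] [AddCommGroup U] [Module R U]
    [AddCommGroup V] [Module R V]
    [Module.Finite R U] [Module.Projective R U]
    [Module.Finite R V] [Module.Projective R V]
    (ω : LinearMap.BilinForm R V) (halt : ∀ v : V, ω v v = 0)
    (f : U →ₗ[R] V) (hiso : ∀ u u' : U, ω (f u) (f u') = 0)
    (g : V →ₗ[R] Module.Dual R U) (hg : ∀ (v : V) (u : U), g v u = ω v (f u))
    (hf : Function.Injective f) (hgsurj : Function.Surjective g)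
    (hexact : LinearMap.range f = LinearMap.ker g) :
    Function.Bijective (fun v : V => (ω v : Module.Dual R V)) := by
  obtain rfl : g = f.dualMap ∘ₗ ω := LinearMap.ext₂ hg
  exact nondegenerate_of_nondegenerate_isotropic_general (flip_eq_neg_one_smul_of_isAlt halt)
    hgsurj hexact.ge
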